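/- Let d ≥ 3. For every normalized d-monotone Archimedean generator ψ and every ε > 0 there exist measures γ_1, γ_2, γ_3 ∈ P_{W_d} such that γ_1 is purely atomic, γ_2 is absolutely continuous with respect to Lebesgue measure on [0,∞), γ_3 is singular with respect to Lebesgue measure and has no atoms, and sup_{x ∈ [0,1]^d} |C_ψ(x) − C_{W_d γ_i}(x)| < ε for each i ∈ {1,2,3}. In particular, the family of d-dimensional Archimedean copulas with absolutely continuous Williamson measure, the family with purely atomic Williamson measure, and the family with singular atomless Williamson measure are each dense in the set of all d-dimensional Archimedean copulas with respect to the uniform metric d_∞. -/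

import Mathlib

open MeasureTheory Set Filter Topology
open scoped ENNReal NNReal Classical

noncomputable section

/-- Extension of a generator `ψ` to `[0,∞]` with the convention `ψ(∞) := 0`. -/
def psiExt (ψ : ℝ → ℝ) (z : ℝ≥0∞) : ℝ := if z = ∞ then 0 else ψ z.toReal

/-- The pseudo-inverse `φ(y) = inf {z ∈ [0,∞] : ψ(z) = y}` of a generator. -/
def pseudoInv (ψ : ℝ → ℝ) (y : ℝ) : ℝ≥0∞ := sInf {z : ℝ≥0∞ | psiExt ψ z = y}

/-- An Archimedean generator: `ψ : [0,∞) → [0,1]` is continuous, non-increasing,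
satisfies `ψ 0 = 1` and `ψ(z) → 0` as `z → ∞`, and is strictly decreasing on
`[0, inf {z ∈ [0,∞] : ψ z = 0}]`. -/
structure IsGenerator (ψ : ℝ → ℝ) : Prop where
  continuousOn : ContinuousOn ψ (Ici 0)
  mem_Icc : ∀ z : ℝ, 0 ≤ z → ψ z ∈ Icc (0 : ℝ) 1
  map_zero : ψ 0 = 1
  tendsto_atTop : Tendsto ψ atTop (𝓝 0)
  antitoneOn : AntitoneOn ψ (Ici 0)
  strictAnti : ∀ ⦃x y : ℝ⦄, 0 ≤ x → x < y → ENNReal.ofReal y ≤ pseudoInv ψ 0 → ψ y < ψ x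

/-- The left-hand derivative `D⁻f`. -/
def leftDeriv (f : ℝ → ℝ) (z : ℝ) : ℝ := derivWithin f (Iio z) z

/-- The right-hand derivative `D⁺f`. -/
def rightDeriv (f : ℝ → ℝ) (z : ℝ) : ℝ := derivWithin f (Ioi z) z

/-- A `d`-monotone Archimedean generator: the derivatives `ψ⁽ᵏ⁾` exist on `(0,∞)` for
`k = 1,…,d-2`, and `(-1)^(d-2) · ψ^(d-2)` is non-negative, non-increasing and convex
on `(0,∞)`. -/
structure IsdMonotoneGenerator (d : ℕ) (ψ : ℝ → ℝ) : Prop where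
  toIsGenerator : IsGenerator ψ
  differentiable : ∀ k : ℕ, k < d - 2 → ∀ z : ℝ, 0 < z → DifferentiableAt ℝ (deriv^[k] ψ) z
  nonneg : ∀ z : ℝ, 0 < z → 0 ≤ (-1 : ℝ) ^ (d - 2) * deriv^[d - 2] ψ z
  antitoneOn : AntitoneOn (fun z => (-1 : ℝ) ^ (d - 2) * deriv^[d - 2] ψ z) (Ioi 0)
  convexOn : ConvexOn ℝ (Ioi 0) (fun z => (-1 : ℝ) ^ (d - 2) * deriv^[d - 2] ψ z)

/-- The `d`-dimensional Archimedean copula generated by `ψ`: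
`C_ψ(x) = ψ(φ(x₁) + ⋯ + φ(x_d))` (with `ψ(∞) := 0`). -/
def archCopula (d : ℕ) (ψ : ℝ → ℝ) (x : Fin d → ℝ) : ℝ :=
  psiExt ψ (∑ i, pseudoInv ψ (x i))

/-- A generator is strict if `ψ(z) > 0` for all `z ≥ 0`. -/
def IsStrictGenerator (ψ : ℝ → ℝ) : Prop := ∀ z : ℝ, 0 ≤ z → 0 < ψ z

/-- The level set `L_t = {x ∈ [0,1]^d : C_ψ(x) = t}`. -/
def levelSet (d : ℕ) (ψ : ℝ → ℝ) (t : ℝ) : Set (Fin d → ℝ) :=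
  {x | (∀ i, x i ∈ Icc (0 : ℝ) 1) ∧ archCopula d ψ x = t}

/-- The Williamson transform `(W_d γ)(z) = ∫ (1 - tz)₊^(d-1) dγ(t)`. -/
def williamson (d : ℕ) (γ : Measure ℝ) (z : ℝ) : ℝ :=
  ∫ t, max (1 - t * z) 0 ^ (d - 1) ∂γ

/-- The class `P_{W_d}`: Borel probability measures on `[0,∞)` with `γ({0}) = 0` and
`∫_{[0,1]} (1-t)^(d-1) dγ(t) = 1/2`. -/
def memPW (d : ℕ) (γ : Measure ℝ) : Prop :=
  IsProbabilityMeasure γ ∧ γ (Iio 0) = 0 ∧ γ {0} = 0 ∧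
    ∫ t in Icc (0 : ℝ) 1, (1 - t) ^ (d - 1) ∂γ = 1 / 2

/-!
The proof has three ingredients.

*Approximate Williamson representation* (`exists_williamson_close`). Averaging `ψ` twice over
windows of length `h` and shifting by `h` gives a function within `o(1)` of `ψ` that is `d` times
differentiable on a neighbourhood of `[0, ∞)`; its `d`-th derivative is, up to sign, a second
difference of the convex function `(-1)^(d-2) ψ^(d-2)`, hence has the right sign. Such a function
has derivatives of alternating sign, all vanishing at infinity (`IsDerivChain.tendsto_and_nonneg`),
so Taylor's formula at infinity (`IsDerivChain.lintegral_eq`) exhibits it, after the substitution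
`t = 1/s` and division by its value at `0`, as `W_d ν` for a probability measure `ν` on `(0, ∞)`.

*Change of type* (`smear`). Moving the mass of `ν` to a geometric grid of ratio `e^η` and then
multiplying it by an independent random factor `1 + η X`, with `X` in `[0, 1]`, changes every `t`
by at most a relative error `e^η - 1`. The kernel `(1 - u)₊^(d-1)` is insensitive to relative
errors uniformly in `u`, so `W_d ν` moves by `O(η)` in the uniform norm
(`williamson_smear_close`). The new measure is a countable mixture of affine images of the law of
`X`; it is atomic, absolutely continuous or singular and atomless when `X` is constant, uniform, or
distributed by an atomless law on the Cantor set (`exists_singular_atomless`).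

*Passage to copulas* (`archCopula_sub_le`). A Williamson transform is convex and non-increasing,
so replacing a summand `z` by `z'` in a sum of nonnegative arguments changes its value by at most
`|W_d μ(z) - W_d μ(z')|`. Hence a generator `δ`-close to `W_d μ`
has a copula `(d+1)δ`-close to that of `W_d μ`. The copula does not change under scaling of the
measure, so scaling can be used to achieve the normalization `W_d γ(1) = 1/2`.
-/

/-! ### Derivative chains of alternating sign -/

/-- `G 0, …, G n` are successive derivatives up to sign, `(G k)' = -G (k+1)`, on `(a, ∞)`. -/
def IsDerivChain (a : ℝ) (n : ℕ) (G : ℕ → ℝ → ℝ) : Prop :=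
  ∀ k < n, ∀ z, a < z → HasDerivAt (G k) (-(G (k + 1) z)) z

theorem antitoneOn_of_hasDerivAt_neg {a : ℝ} {f g : ℝ → ℝ}
    (h : ∀ z, a < z → HasDerivAt f (-(g z)) z) (hg : ∀ z, a < z → 0 ≤ g z) :
    AntitoneOn f (Ioi a) := by
  apply antitoneOn_of_deriv_nonpos (convex_Ioi a)
  · exact fun x hx => (h x hx).continuousAt.continuousWithinAt
  · intro x hx
    rw [interior_Ioi] at hx
    exact (h x hx).differentiableAt.differentiableWithinAt
  · intro x hx
    rw [interior_Ioi] at hx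
    rw [(h x hx).deriv]
    linarith [hg x hx]

theorem nonneg_of_antitoneOn_of_tendsto {a : ℝ} {f : ℝ → ℝ} (hf : AntitoneOn f (Ioi a))
    (h0 : Tendsto f atTop (𝓝 0)) {z : ℝ} (hz : a < z) : 0 ≤ f z := by
  refine le_of_tendsto h0 ?_
  filter_upwards [eventually_ge_atTop z] with y hy
  exact hf hz (hz.trans_le hy) hy

/-- If the first function of a chain vanishes at infinity and the last one is antitone, the last
one vanishes at infinity too. Induction on the length, applied to the unit differences
`G k z - G k (z+1)`, whose last member is squeezed between values of `G n` by the mean value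
theorem. -/
theorem IsDerivChain.tendsto_last {a : ℝ} : ∀ {n : ℕ} {G : ℕ → ℝ → ℝ}, IsDerivChain a n G →
    Tendsto (G 0) atTop (𝓝 0) → AntitoneOn (G n) (Ioi a) → Tendsto (G n) atTop (𝓝 0) := by
  intro n
  induction n with
  | zero => intro G _ h0 _; exact h0
  | succ n ih =>
    intro G hG h0 hanti
    set H : ℕ → ℝ → ℝ := fun k z => G k z - G k (z + 1) with hH
    have hHd : ∀ k < n + 1, ∀ z, a < z → HasDerivAt (H k) (-(H (k + 1) z)) z := by
      intro k hk z hz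
      have h1 := hG k hk z hz
      have h2 := (hG k hk (z + 1) (by linarith)).comp_add_const z 1
      have h3 : HasDerivAt (H k) (-(G (k + 1) z) - -(G (k + 1) (z + 1))) z := h1.sub h2
      convert h3 using 1
      simp only [hH]; ring
    have hHlim : Tendsto (H n) atTop (𝓝 0) := by
      apply ih
      · exact fun k hk => hHd k (by omega)
      · have := h0.sub (h0.comp (tendsto_atTop_add_const_right atTop (1 : ℝ) tendsto_id))
        simpa using this
      · refine antitoneOn_of_hasDerivAt_neg (hHd n (by omega)) ?_
        intro z hz
        have := hanti (mem_Ioi.2 hz) (mem_Ioi.2 (by linarith : a < z + 1)) (by linarith)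
        simp only [hH]; linarith
    have hmv : ∀ z, a < z → ∃ ξ ∈ Ioo z (z + 1), H n z = G (n + 1) ξ := by
      intro z hz
      obtain ⟨ξ, hξ, h⟩ := exists_hasDerivAt_eq_slope (G n) (fun x => -(G (n + 1) x))
        (by linarith : z < z + 1)
        (fun x hx => (hG n (by omega) x (hz.trans_le hx.1)).continuousAt.continuousWithinAt)
        (fun x hx => hG n (by omega) x (hz.trans hx.1))
      refine ⟨ξ, hξ, ?_⟩
      have : z + 1 - z = 1 := by ring
      rw [this, div_one] at h
      simp only [hH]; linarith
    have hH' : Tendsto (fun z => H n (z - 1)) atTop (𝓝 0) :=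
      hHlim.comp (tendsto_atTop_add_const_right atTop (-1 : ℝ) tendsto_id)
    refine tendsto_of_tendsto_of_tendsto_of_le_of_le' hHlim hH' ?_ ?_
    · filter_upwards [eventually_gt_atTop a] with z hz
      obtain ⟨ξ, hξ, h⟩ := hmv z hz
      rw [h]
      exact hanti (mem_Ioi.2 hz) (mem_Ioi.2 (hz.trans hξ.1)) hξ.1.le
    · filter_upwards [eventually_gt_atTop (a + 1)] with z hz
      obtain ⟨ξ, hξ, h⟩ := hmv (z - 1) (by linarith)
      rw [h]
      exact hanti (mem_Ioi.2 (by linarith [hξ.1])) (mem_Ioi.2 (by linarith)) (by linarith [hξ.2])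

theorem IsDerivChain.tendsto_and_nonneg {a : ℝ} : ∀ {n : ℕ} {G : ℕ → ℝ → ℝ},
    IsDerivChain a n G → Tendsto (G 0) atTop (𝓝 0) → (∀ z, a < z → 0 ≤ G n z) →
    ∀ k < n, Tendsto (G k) atTop (𝓝 0) ∧ ∀ z, a < z → 0 ≤ G k z := by
  intro n
  induction n with
  | zero => intro G _ _ _ k hk; omega
  | succ n ih =>
    intro G hG h0 hpos k hk
    have hanti := antitoneOn_of_hasDerivAt_neg (hG n (by omega)) hpos
    have hG' : IsDerivChain a n G := fun k hk => hG k (by omega)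
    have hlim := hG'.tendsto_last h0 hanti
    have hnn : ∀ z, a < z → 0 ≤ G n z :=
      fun z hz => nonneg_of_antitoneOn_of_tendsto hanti hlim hz
    rcases Nat.lt_succ_iff_lt_or_eq.1 hk with h | rfl
    · exact ih hG' h0 hnn k h
    · exact ⟨hlim, hnn⟩

theorem lintegral_Ioi_of_hasDerivAt_neg {a : ℝ} {f g : ℝ → ℝ}
    (h : ∀ z, a < z → HasDerivAt f (-(g z)) z) (hg : ∀ z, a < z → 0 ≤ g z)
    (h0 : Tendsto f atTop (𝓝 0)) {z : ℝ} (hz : a < z) :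
    ENNReal.ofReal (f z) = ∫⁻ s in Ioi z, ENNReal.ofReal (g s) := by
  have hd : ∀ x ∈ Ici z, HasDerivAt (fun x => -(f x)) (g x) x := by
    intro x hx
    have h1 : HasDerivAt (fun x => -(f x)) (- -(g x)) x := (h x (hz.trans_le hx)).neg
    rwa [neg_neg] at h1
  have hp : ∀ x ∈ Ioi z, 0 ≤ g x := fun x hx => hg x (hz.trans hx)
  have hl : Tendsto (fun x => -(f x)) atTop (𝓝 0) := by simpa using h0.neg
  have hint := integrableOn_Ioi_deriv_of_nonneg' hd hp hl
  have := integral_Ioi_of_hasDerivAt_of_nonneg' hd hp hl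
  rw [← ofReal_integral_eq_lintegral_ofReal hint
    ((ae_restrict_iff' measurableSet_Ioi).2 (Eventually.of_forall hp)), this]
  simp

theorem lintegral_pow_sub {n : ℕ} {z u : ℝ} (hzu : z ≤ u) :
    ∫⁻ s in Ioo z u, ENNReal.ofReal ((u - s) ^ n / n.factorial) =
      ENNReal.ofReal ((u - z) ^ (n + 1) / (n + 1).factorial) := by
  have hc : Continuous fun s : ℝ => (u - s) ^ n / (n.factorial : ℝ) := by fun_prop
  rw [setLIntegral_congr Ioo_ae_eq_Ioc, ← ofReal_integral_eq_lintegral_ofReal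
    ((hc.integrableOn_Icc (a := z) (b := u)).mono_set Ioc_subset_Icc_self),
    ← intervalIntegral.integral_of_le hzu]
  · congr 1
    rw [intervalIntegral.integral_div, intervalIntegral.integral_comp_sub_left (fun x => x ^ n),
      integral_pow, Nat.factorial_succ]
    have : ((n + 1 : ℕ) : ℝ) ≠ 0 := by positivity
    have : (n.factorial : ℝ) ≠ 0 := by positivity
    push_cast
    field_simp
    simp
  · refine (ae_restrict_iff' measurableSet_Ioc).2 (Eventually.of_forall fun s hs => ?_)
    have : 0 ≤ u - s := by linarith [hs.2]
    positivity

/-- Taylor's formula with integral remainder at infinity: the first member of a chain is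
recovered from the last one by the truncated power kernel. -/
theorem IsDerivChain.lintegral_eq {a : ℝ} : ∀ {n : ℕ} {G : ℕ → ℝ → ℝ},
    IsDerivChain a (n + 1) G → Measurable (G (n + 1)) →
    (∀ k < n + 1, Tendsto (G k) atTop (𝓝 0)) → (∀ k ≤ n + 1, ∀ z, a < z → 0 ≤ G k z) →
    ∀ z, a < z → ENNReal.ofReal (G 0 z) =
      ∫⁻ s in Ioi z, ENNReal.ofReal ((s - z) ^ n / n.factorial) *
        ENNReal.ofReal (G (n + 1) s) := by
  intro n
  induction n with
  | zero =>
    intro G hG _ hlim hpos z hz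
    rw [lintegral_Ioi_of_hasDerivAt_neg (hG 0 (by omega)) (hpos 1 (by omega)) (hlim 0 (by omega))
      hz]
    simp
  | succ n ih =>
    intro G hG hmeas hlim hpos z hz
    rw [lintegral_Ioi_of_hasDerivAt_neg (hG 0 (by omega)) (hpos 1 (by omega)) (hlim 0 (by omega))
      hz]
    have key := ih (G := fun k => G (k + 1)) (fun k hk => hG (k + 1) (by omega)) hmeas
      (fun k hk => hlim (k + 1) (by omega)) (fun k hk => hpos (k + 1) (by omega))
    set F : ℝ → ℝ → ℝ≥0∞ := fun s u =>
      (({p : ℝ × ℝ | z < p.1 ∧ p.1 < p.2}).indicator fun p =>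
        ENNReal.ofReal ((p.2 - p.1) ^ n / n.factorial) * ENNReal.ofReal (G (n + 1 + 1) p.2)) (s, u)
      with hF
    have hFm : Measurable (Function.uncurry F) := by
      have : Measurable fun p : ℝ × ℝ =>
          ENNReal.ofReal ((p.2 - p.1) ^ n / n.factorial) *
            ENNReal.ofReal (G (n + 1 + 1) p.2) := by fun_prop
      refine this.indicator ?_
      exact (measurableSet_lt measurable_const measurable_fst).inter
        (measurableSet_lt measurable_fst measurable_snd)
    calc ∫⁻ s in Ioi z, ENNReal.ofReal (G (0 + 1) s)
        = ∫⁻ s, ∫⁻ u, F s u := by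
          rw [← lintegral_indicator measurableSet_Ioi]
          refine lintegral_congr fun s => ?_
          by_cases hs : z < s
          · rw [indicator_of_mem (mem_Ioi.2 hs), key s (hz.trans hs),
              ← lintegral_indicator measurableSet_Ioi]
            refine lintegral_congr fun u => ?_
            by_cases hu : s < u <;> simp [hF, hs, hu, indicator]
          · simp [hF, hs, indicator]
      _ = ∫⁻ u, ∫⁻ s, F s u := lintegral_lintegral_swap hFm.aemeasurable
      _ = _ := by
          rw [← lintegral_indicator measurableSet_Ioi]
          refine lintegral_congr fun u => ?_
          by_cases hu : z < u
          · rw [indicator_of_mem (mem_Ioi.2 hu), ← lintegral_pow_sub hu.le,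
              ← lintegral_mul_const _ (by fun_prop),
              ← lintegral_indicator measurableSet_Ioo]
            refine lintegral_congr fun s => ?_
            by_cases hs : z < s ∧ s < u
            · simp [hF, hs.1, hs.2, indicator]
            · rw [indicator_of_notMem (by simpa using hs)]
              simp only [hF]
              rw [indicator_of_notMem (by simpa using hs)]
          · rw [indicator_of_notMem (by simpa using hu)]
            have : ∀ s, F s u = 0 := by
              intro s
              simp only [hF]
              rw [indicator_of_notMem]
              rintro ⟨h1, h2⟩
              exact hu (h1.trans h2)
            simp [this]

/-! ### Approximate Williamson representation of a generator -/

/-- Steklov averaging `z ↦ (1/h) ∫_z^{z+h} f`. -/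
theorem exists_steklov {f : ℝ → ℝ} (hf : Continuous f) (hanti : Antitone f) {h : ℝ} (hh : 0 < h) :
    ∃ A : ℝ → ℝ, (∀ z, HasDerivAt A ((f (z + h) - f z) / h) z) ∧ Antitone A ∧
      ∀ z, f (z + h) ≤ A z ∧ A z ≤ f z := by
  set P : ℝ → ℝ := fun z => ∫ x in (0 : ℝ)..z, f x with hP
  have hPd : ∀ z, HasDerivAt P (f z) z := fun z =>
    intervalIntegral.integral_hasDerivAt_right (hf.intervalIntegrable _ _)
      (hf.stronglyMeasurableAtFilter _ _) hf.continuousAt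
  have hAd : ∀ z, HasDerivAt (fun z => (P (z + h) - P z) / h) ((f (z + h) - f z) / h) z :=
    fun z => (((hPd (z + h)).comp_add_const z h).sub (hPd z)).div_const h
  refine ⟨fun z => (P (z + h) - P z) / h, hAd, ?_, ?_⟩
  · apply antitone_of_deriv_nonpos (fun z => (hAd z).differentiableAt)
    intro z
    rw [(hAd z).deriv]
    have := hanti (by linarith : z ≤ z + h)
    exact div_nonpos_of_nonpos_of_nonneg (by linarith) hh.le
  · intro z
    obtain ⟨ξ, hξ, h1⟩ := exists_hasDerivAt_eq_slope P f (by linarith : z < z + h)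
      (fun x _ => (hPd x).continuousAt.continuousWithinAt) (fun x _ => hPd x)
    have h2 : (P (z + h) - P z) / h = f ξ := by rw [h1]; congr 1; ring
    simp only [h2]
    exact ⟨hanti hξ.2.le, hanti hξ.1.le⟩

/-- A `d`-monotone generator `ψ` is approximated by a function `G 0` with `d` derivatives of
alternating sign. `G 0` is `ψ` averaged twice and shifted by `h`, so that the chain lives on a
neighbourhood of `[0, ∞)`; its `d`-th derivative is, up to sign, a second difference of the convex
function `(-1)^(d-2) ψ^(d-2)`, whence its sign. -/
theorem exists_smoothed_chain {m : ℕ} {ψ : ℝ → ℝ} (hψ : IsdMonotoneGenerator (m + 3) ψ)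
    {h : ℝ} (hh : 0 < h) :
    ∃ G : ℕ → ℝ → ℝ, IsDerivChain (-h) (m + 3) G ∧ Measurable (G (m + 3)) ∧
      (∀ z, -h < z → 0 ≤ G (m + 3) z) ∧
      ∀ z, 0 ≤ z → ψ (z + 3 * h) ≤ G 0 z ∧ G 0 z ≤ ψ z := by
  have hgen := hψ.toIsGenerator
  set ψ₀ : ℝ → ℝ := fun z => ψ (max z 0) with hψ₀
  have hcont : Continuous ψ₀ :=
    hgen.continuousOn.comp_continuous (by fun_prop) fun z => mem_Ici.2 (le_max_right _ _)
  have hanti : Antitone ψ₀ := fun x y hxy =>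
    hgen.antitoneOn (mem_Ici.2 (le_max_right _ _)) (mem_Ici.2 (le_max_right _ _))
      (max_le_max hxy le_rfl)
  have hψ₀eq : ∀ z, 0 ≤ z → ψ₀ z = ψ z := fun z hz => by simp [hψ₀, hz]
  obtain ⟨A, hAd, hAanti, hA⟩ := exists_steklov hcont hanti hh
  have hAc : Continuous A := continuous_iff_continuousAt.2 fun z => (hAd z).continuousAt
  obtain ⟨B, hBd, -, hB⟩ := exists_steklov hAc hAanti hh
  set F : ℕ → ℝ → ℝ := fun k z => (-1) ^ k * deriv^[k] ψ z with hF
  have hFd : IsDerivChain 0 (m + 1) F := by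
    intro k hk z hz
    have h1 := ((hψ.differentiable k (by omega) z hz).hasDerivAt).const_mul ((-1 : ℝ) ^ k)
    have h2 : HasDerivAt (F k) ((-1) ^ k * deriv (deriv^[k] ψ) z) z := h1
    convert h2 using 1
    simp only [hF, Function.iterate_succ_apply']
    ring
  let G : ℕ → ℝ → ℝ := fun k => match k with
    | 0 => fun z => B (z + h)
    | 1 => fun z => (A (z + h) - A (z + h + h)) / h
    | k + 2 => fun z => (F k (z + h) - 2 * F k (z + 2 * h) + F k (z + 3 * h)) / h ^ 2
  refine ⟨G, ?_, ?_, ?_, ?_⟩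
  · intro k hk z hz
    match k with
    | 0 =>
      have h1 : HasDerivAt (G 0) ((A (z + h + h) - A (z + h)) / h) z :=
        (hBd (z + h)).comp_add_const z h
      convert h1 using 1
      simp only [G]; ring
    | 1 =>
      have h1 := (hAd (z + h)).comp_add_const z h
      have h2 := (hAd (z + (h + h))).comp_add_const z (h + h)
      have h3 := (h1.sub h2).div_const h
      have h4 : G 1 = (fun x => ((fun x => A (x + h)) - fun x => A (x + (h + h))) x / h) := by
        funext x; simp [G, add_assoc]
      have h5 : HasDerivAt (G 1) _ z := h4 ▸ h3
      convert h5 using 1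
      rw [show z + (h + h) + h = z + 3 * h by ring, show z + h + h = z + 2 * h by ring,
        show z + (h + h) = z + 2 * h by ring, hψ₀eq _ (by linarith : 0 ≤ z + h),
        hψ₀eq _ (by linarith : 0 ≤ z + 2 * h), hψ₀eq _ (by linarith : 0 ≤ z + 3 * h)]
      simp only [G, hF]
      field_simp
      simp
      ring
    | k + 2 =>
      have hk' : k < m + 1 := by omega
      have h1 := (hFd k hk' (z + h) (by linarith)).comp_add_const z h
      have h2 := ((hFd k hk' (z + 2 * h) (by linarith)).comp_add_const z (2 * h)).const_mul 2
      have h3 := (hFd k hk' (z + 3 * h) (by linarith)).comp_add_const z (3 * h)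
      have h4 := ((h1.sub h2).add h3).div_const (h ^ 2)
      have h5 : HasDerivAt (G (k + 2)) _ z := h4
      convert h5 using 1
      simp only [G]
      ring
  · have hm : Measurable (F (m + 1)) := by
      simp only [hF, Function.iterate_succ_apply']
      exact (measurable_deriv _).const_mul _
    change Measurable fun z =>
      (F (m + 1) (z + h) - 2 * F (m + 1) (z + 2 * h) + F (m + 1) (z + 3 * h)) / h ^ 2
    fun_prop
  · intro z hz
    change 0 ≤ (F (m + 1) (z + h) - 2 * F (m + 1) (z + 2 * h) + F (m + 1) (z + 3 * h)) / h ^ 2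
    have hc := hψ.convexOn.2 (mem_Ioi.2 (by linarith : 0 < z + h))
      (mem_Ioi.2 (by linarith : 0 < z + 3 * h)) (by norm_num : (0 : ℝ) ≤ 1 / 2)
      (by norm_num : (0 : ℝ) ≤ 1 / 2) (by norm_num)
    simp only [smul_eq_mul] at hc
    rw [show 1 / 2 * (z + h) + 1 / 2 * (z + 3 * h) = z + 2 * h by ring] at hc
    have hc' : F (m + 1) (z + 2 * h) ≤ 1 / 2 * F (m + 1) (z + h) + 1 / 2 * F (m + 1) (z + 3 * h) :=
      hc
    apply div_nonneg _ (by positivity)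
    linarith
  · intro z hz
    constructor
    · have h1 := (hB (z + h)).1
      have h2 := (hA (z + h + h)).1
      rw [show z + h + h + h = z + 3 * h by ring, hψ₀eq _ (by linarith)] at h2
      exact h2.trans h1
    · have h1 := (hB (z + h)).2
      have h2 := (hA (z + h)).2
      rw [hψ₀eq _ (by linarith)] at h2
      exact (h1.trans h2).trans
        (hgen.antitoneOn (mem_Ici.2 hz) (mem_Ici.2 (by linarith)) (by linarith))

/-- A chain with nonnegative last member has a Williamson representation: substituting `t = 1/s`
in Taylor's formula turns the kernel `(s - z)₊^n` into `s^n (1 - t z)₊^n`. -/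
theorem exists_williamson_of_chain {n : ℕ} {a : ℝ} (ha : a < 0) (hn : n ≠ 0) {G : ℕ → ℝ → ℝ}
    (hG : IsDerivChain a (n + 1) G) (hmeas : Measurable (G (n + 1)))
    (hlim : Tendsto (G 0) atTop (𝓝 0)) (hpos : ∀ z, a < z → 0 ≤ G (n + 1) z) (h0 : 0 < G 0 0) :
    ∃ ν : Measure ℝ, IsProbabilityMeasure ν ∧ ν (Iic 0) = 0 ∧
      ∀ z, 0 ≤ z → williamson (n + 1) ν z = G 0 z / G 0 0 := by
  have hall := hG.tendsto_and_nonneg hlim hpos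
  have hrep := hG.lintegral_eq hmeas (fun k hk => (hall k hk).1) (by
    intro k hk
    rcases Nat.lt_or_eq_of_le hk with h | rfl
    · exact (hall k h).2
    · exact hpos)
  set c : ℝ≥0∞ := ENNReal.ofReal (G 0 0) with hc
  have hc0 : c ≠ 0 := by simpa [hc] using h0
  have hct : c ≠ ∞ := ENNReal.ofReal_ne_top
  set ρ : ℝ → ℝ≥0∞ := fun s => c⁻¹ * (Ioi (0 : ℝ)).indicator
    (fun s => ENNReal.ofReal (s ^ n / n.factorial) * ENNReal.ofReal (G (n + 1) s)) s with hρ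
  have hρm : Measurable ρ := by
    refine Measurable.const_mul (Measurable.indicator ?_ measurableSet_Ioi) _
    fun_prop
  have hinv : Measurable fun s : ℝ => s⁻¹ := measurable_inv
  refine ⟨(volume.withDensity ρ).map fun s => s⁻¹, ?_, ?_, ?_⟩
  · have : IsProbabilityMeasure (volume.withDensity ρ) := by
      constructor
      rw [withDensity_apply _ MeasurableSet.univ, Measure.restrict_univ]
      simp only [hρ]
      rw [lintegral_const_mul _ (Measurable.indicator (by fun_prop) measurableSet_Ioi),
        lintegral_indicator measurableSet_Ioi]
      have := hrep 0 ha
      simp only [sub_zero] at this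
      rw [← this]
      exact ENNReal.inv_mul_cancel hc0 hct
    exact Measure.isProbabilityMeasure_map hinv.aemeasurable
  · rw [Measure.map_apply hinv measurableSet_Iic, withDensity_apply _ (hinv measurableSet_Iic),
      setLIntegral_eq_zero_iff (hinv measurableSet_Iic) hρm]
    refine Eventually.of_forall fun s hs => ?_
    have : s ≤ 0 := by simpa using hs
    simp [hρ, this]
  · intro z hz
    have hk : Measurable fun t : ℝ => max (1 - t * z) 0 ^ n := by fun_prop
    have hk' : Measurable fun s : ℝ => max (1 - s⁻¹ * z) 0 ^ n := by fun_prop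
    have hpt : ∀ s : ℝ, (ρ * fun s : ℝ => ENNReal.ofReal (max (1 - s⁻¹ * z) 0 ^ n)) s =
        c⁻¹ * (Ioi z).indicator (fun s => ENNReal.ofReal ((s - z) ^ n / n.factorial) *
          ENNReal.ofReal (G (n + 1) s)) s := by
      intro s
      simp only [hρ, Pi.mul_apply]
      rcases le_or_gt s 0 with hs | hs
      · rw [indicator_of_notMem (by simpa using hs),
          indicator_of_notMem (by simpa using hs.trans hz)]
        simp
      rw [indicator_of_mem (mem_Ioi.2 hs)]
      rcases le_or_gt s z with hsz | hsz
      · rw [indicator_of_notMem (by simpa using hsz), max_eq_right, zero_pow hn]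
        · simp
        · have : 1 ≤ s⁻¹ * z := by
            rw [inv_mul_eq_div, le_div_iff₀ hs]; linarith
          linarith
      · have h1 : 0 ≤ 1 - s⁻¹ * z := by
          have : s⁻¹ * z ≤ 1 := by
            rw [inv_mul_eq_div, div_le_iff₀ hs]; linarith
          linarith
        have h2 : s ^ n / n.factorial * (1 - s⁻¹ * z) ^ n = (s - z) ^ n / n.factorial := by
          rw [div_mul_eq_mul_div, ← mul_pow]
          congr 2
          field_simp
        rw [indicator_of_mem (mem_Ioi.2 hsz), max_eq_left h1, ← h2,
          ENNReal.ofReal_mul (by positivity)]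
        ring
    rw [williamson, Nat.add_sub_cancel, integral_map hinv.aemeasurable hk.aestronglyMeasurable,
      integral_eq_lintegral_of_nonneg_ae (Eventually.of_forall fun s => ?_)
        hk'.aestronglyMeasurable,
      lintegral_withDensity_eq_lintegral_mul _ hρm hk'.ennreal_ofReal, lintegral_congr hpt,
      lintegral_const_mul _ (Measurable.indicator (by fun_prop) measurableSet_Ioi),
      lintegral_indicator measurableSet_Ioi, ← hrep z (ha.trans_le hz), ENNReal.toReal_mul,
      ENNReal.toReal_inv, hc, ENNReal.toReal_ofReal h0.le,
      ENNReal.toReal_ofReal ((hall 0 (by omega)).2 z (ha.trans_le hz))]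
    · ring
    · exact pow_nonneg (le_max_right _ _) _

/-- Every `d`-monotone generator is uniformly close to a Williamson transform. -/
theorem exists_williamson_close {m : ℕ} {ψ : ℝ → ℝ} (hψ : IsdMonotoneGenerator (m + 3) ψ)
    {δ : ℝ} (hδ : 0 < δ) :
    ∃ ν : Measure ℝ, IsProbabilityMeasure ν ∧ ν (Iic 0) = 0 ∧
      ∀ z, 0 ≤ z → |williamson (m + 3) ν z - ψ z| ≤ δ := by
  have hgen := hψ.toIsGenerator
  have habs : UniformContinuous fun z : ℝ => ψ |z| := by
    refine Continuous.uniformContinuous_of_tendsto_cocompact (x := 0) ?_ ?_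
    · exact hgen.continuousOn.comp_continuous continuous_abs fun z => mem_Ici.2 (abs_nonneg z)
    · exact hgen.tendsto_atTop.comp (tendsto_norm_cocompact_atTop (E := ℝ))
  obtain ⟨δ', hδ'0, hδ'1, hδ'⟩ : ∃ δ', 0 < δ' ∧ δ' ≤ 1 / 2 ∧ 2 * δ' ≤ δ :=
    ⟨min (1 / 2) (δ / 2), by positivity, min_le_left _ _, by
      linarith [min_le_right (1 / 2 : ℝ) (δ / 2)]⟩
  obtain ⟨η, hη, hclose⟩ := Metric.uniformContinuous_iff.1 habs δ' hδ'0
  obtain ⟨h, hh, h3⟩ : ∃ h : ℝ, 0 < h ∧ 3 * h < η := ⟨η / 4, by positivity, by linarith⟩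
  have hdrop : ∀ z, 0 ≤ z → ψ z - δ' ≤ ψ (z + 3 * h) := by
    intro z hz
    have h1 : dist z (z + 3 * h) < η := by
      rw [Real.dist_eq, abs_sub_comm, add_sub_cancel_left, abs_of_pos (by positivity)]
      exact h3
    have h2 := hclose h1
    simp only [Real.dist_eq] at h2
    rw [abs_of_nonneg hz, abs_of_nonneg (by positivity : 0 ≤ z + 3 * h)] at h2
    linarith [(abs_lt.1 h2).2]
  obtain ⟨G, hG, hmeas, hpos, hb⟩ := exists_smoothed_chain hψ hh
  have hm := hb 0 le_rfl
  have hm1 := hdrop 0 le_rfl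
  rw [hgen.map_zero] at hm hm1
  have hG0 : 1 - δ' ≤ G 0 0 := hm1.trans hm.1
  have hG0' : 0 < G 0 0 := by linarith
  have hlim : Tendsto (G 0) atTop (𝓝 0) := by
    refine tendsto_of_tendsto_of_tendsto_of_le_of_le' tendsto_const_nhds hgen.tendsto_atTop ?_ ?_
    · filter_upwards [eventually_ge_atTop 0] with z hz
      exact (hgen.mem_Icc (z + 3 * h) (by positivity)).1.trans (hb z hz).1
    · filter_upwards [eventually_ge_atTop 0] with z hz using (hb z hz).2
  obtain ⟨ν, hν, hν0, hW⟩ := exists_williamson_of_chain (by linarith : -h < 0) (by omega) hG hmeas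
    hlim hpos hG0'
  refine ⟨ν, hν, hν0, fun z hz => ?_⟩
  have hle := (hgen.mem_Icc z hz).2
  have hlow : ψ z - δ' ≤ G 0 z := (hdrop z hz).trans (hb z hz).1
  have hnn : 0 ≤ G 0 z := (hgen.mem_Icc (z + 3 * h) (by positivity)).1.trans (hb z hz).1
  have hup := (hb z hz).2
  rw [hW z hz, abs_le]
  constructor
  · have : G 0 z ≤ G 0 z / G 0 0 := by
      rw [le_div_iff₀ hG0']
      exact mul_le_of_le_one_right hnn hm.2
    linarith
  · have : G 0 z / G 0 0 ≤ G 0 z + 2 * δ' := by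
      rw [div_le_iff₀ hG0']
      nlinarith
    linarith

/-! ### Kernel estimates and properties of the Williamson transform -/

theorem pow_sub_pow_le_of_sub_le {A A' B B' : ℝ} (hA : 0 ≤ A') (hB : 0 ≤ B') (hAA : A' ≤ A)
    (hBB : B' ≤ B) (hBA : B ≤ A) (hBA' : B' ≤ A') (hsub : B - B' ≤ A - A') (n : ℕ) :
    B ^ n - B' ^ n ≤ A ^ n - A' ^ n := by
  induction n with
  | zero => simp
  | succ n ih =>
    have h1 : 0 ≤ B ^ n - B' ^ n := sub_nonneg.2 (pow_le_pow_left₀ hB hBB n)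
    have h2 : B' ^ n ≤ A' ^ n := pow_le_pow_left₀ hB hBA' n
    have h3 : 0 ≤ B' ^ n := pow_nonneg hB n
    have h4 : B * (B ^ n - B' ^ n) ≤ A * (A ^ n - A' ^ n) :=
      mul_le_mul hBA ih h1 (by linarith)
    have h5 : (B - B') * B' ^ n ≤ (A - A') * A' ^ n :=
      mul_le_mul hsub h2 h3 (by linarith)
    rw [pow_succ, pow_succ, pow_succ, pow_succ]
    nlinarith

theorem kernel_nonneg (n : ℕ) (u : ℝ) : 0 ≤ max (1 - u) 0 ^ n := pow_nonneg (le_max_right _ _) n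

theorem kernel_le_one (n : ℕ) {u : ℝ} (hu : 0 ≤ u) : max (1 - u) 0 ^ n ≤ 1 :=
  pow_le_one₀ (le_max_right _ _) (max_le (by linarith) zero_le_one)

theorem kernel_norm_le (n : ℕ) {u : ℝ} (hu : 0 ≤ u) : ‖max (1 - u) 0 ^ n‖ ≤ 1 := by
  rw [Real.norm_of_nonneg (kernel_nonneg n u)]
  exact kernel_le_one n hu

theorem kernel_antitone (n : ℕ) {u v : ℝ} (huv : u ≤ v) :
    max (1 - v) 0 ^ n ≤ max (1 - u) 0 ^ n :=
  pow_le_pow_left₀ (le_max_right _ _) (max_le_max (by linarith) le_rfl) n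

/-- Convexity of the kernel `(1 - u)₊^n`, as monotonicity of its increments. -/
theorem kernel_sub_le (n : ℕ) {u u' v : ℝ} (huu : u ≤ u') (hv : 0 ≤ v) :
    max (1 - (u + v)) 0 ^ n - max (1 - (u' + v)) 0 ^ n ≤
      max (1 - u) 0 ^ n - max (1 - u') 0 ^ n := by
  refine pow_sub_pow_le_of_sub_le (le_max_right _ _) (le_max_right _ _)
    (max_le_max (by linarith) le_rfl) (max_le_max (by linarith) le_rfl)
    (max_le_max (by linarith) le_rfl) (max_le_max (by linarith) le_rfl) ?_ n
  rcases max_cases (1 - (u + v)) 0 with h1 | h1 <;> rcases max_cases (1 - (u' + v)) 0 with h2 | h2 <;>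
  rcases max_cases (1 - u) 0 with h3 | h3 <;> rcases max_cases (1 - u') 0 with h4 | h4 <;> linarith

/-- A relative perturbation of the argument changes the kernel by little, uniformly, because the
kernel is Lipschitz and vanishes for `u ≥ 1`. -/
theorem kernel_relative (n : ℕ) {u u' θ : ℝ} (hu : 0 ≤ u) (hu' : 0 ≤ u') (hθ : 0 ≤ θ)
    (h1 : |u - u'| ≤ θ * u) (h2 : |u - u'| ≤ θ * u') :
    |max (1 - u) 0 ^ n - max (1 - u') 0 ^ n| ≤ n * θ := by
  by_cases hmin : 1 ≤ u ∧ 1 ≤ u'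
  · rw [max_eq_right (by linarith), max_eq_right (by linarith), sub_self, abs_zero]
    positivity
  have hle : |u - u'| ≤ θ := by
    rw [not_and_or, not_le, not_le] at hmin
    rcases hmin with h | h
    · exact h1.trans (mul_le_of_le_one_right hθ h.le)
    · exact h2.trans (mul_le_of_le_one_right hθ h.le)
  have hlip : |max (1 - u) 0 - max (1 - u') 0| ≤ θ := by
    refine (abs_max_sub_max_le_abs _ _ _).trans ?_
    rwa [show 1 - u - (1 - u') = -(u - u') by ring, abs_neg]
  refine (abs_pow_sub_pow_le _ _ n).trans ?_
  have hM : max |max (1 - u) 0| |max (1 - u') 0| ^ (n - 1) ≤ 1 := by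
    refine pow_le_one₀ (by positivity) (max_le ?_ ?_) <;>
    · rw [abs_of_nonneg (le_max_right _ _)]
      exact max_le (by linarith) zero_le_one
  calc _ ≤ θ * n * 1 := by gcongr
    _ = n * θ := by ring

theorem ae_pos_of_Iic {μ : Measure ℝ} (h0 : μ (Iic 0) = 0) : ∀ᵐ t ∂μ, 0 < t := by
  rw [ae_iff]
  convert h0 using 2
  ext t; simp

theorem integrable_kernel {μ : Measure ℝ} [IsProbabilityMeasure μ] (h0 : μ (Iic 0) = 0) (n : ℕ)
    {z : ℝ} (hz : 0 ≤ z) : Integrable (fun t => max (1 - t * z) 0 ^ n) μ := by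
  refine Integrable.of_bound (C := 1) (by fun_prop) ?_
  filter_upwards [ae_pos_of_Iic h0] with t ht
  exact kernel_norm_le n (by positivity)

theorem williamson_zero (d : ℕ) (μ : Measure ℝ) [IsProbabilityMeasure μ] :
    williamson d μ 0 = 1 := by
  simp [williamson]

theorem williamson_antitone {μ : Measure ℝ} [IsProbabilityMeasure μ] (h0 : μ (Iic 0) = 0) (d : ℕ)
    {a a' : ℝ} (ha : 0 ≤ a) (haa : a ≤ a') : williamson d μ a' ≤ williamson d μ a := by
  refine integral_mono_ae (integrable_kernel h0 _ (ha.trans haa)) (integrable_kernel h0 _ ha) ?_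
  filter_upwards [ae_pos_of_Iic h0] with t ht
  exact kernel_antitone _ (by gcongr)

theorem williamson_nonneg (d : ℕ) (μ : Measure ℝ) (z : ℝ) : 0 ≤ williamson d μ z :=
  integral_nonneg fun _ => kernel_nonneg _ _

/-- Convexity of the Williamson transform, as monotonicity of its increments. -/
theorem williamson_sub_le {μ : Measure ℝ} [IsProbabilityMeasure μ] (h0 : μ (Iic 0) = 0) (d : ℕ)
    {a a' b : ℝ} (ha : 0 ≤ a) (haa : a ≤ a') (hb : 0 ≤ b) :
    williamson d μ (a + b) - williamson d μ (a' + b) ≤ williamson d μ a - williamson d μ a' := by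
  have ha' := ha.trans haa
  simp only [williamson]
  rw [← integral_sub (integrable_kernel h0 _ (by positivity))
      (integrable_kernel h0 _ (by positivity)),
    ← integral_sub (integrable_kernel h0 _ ha) (integrable_kernel h0 _ ha')]
  refine integral_mono_ae
    ((integrable_kernel h0 _ (by positivity)).sub (integrable_kernel h0 _ (by positivity)))
    ((integrable_kernel h0 _ ha).sub (integrable_kernel h0 _ ha')) ?_
  filter_upwards [ae_pos_of_Iic h0] with t ht
  simp only [mul_add]
  exact kernel_sub_le _ (by gcongr) (by positivity)

theorem williamson_continuousOn {μ : Measure ℝ} [IsProbabilityMeasure μ] (h0 : μ (Iic 0) = 0)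
    (d : ℕ) : ContinuousOn (williamson d μ) (Ici 0) := by
  refine continuousOn_of_dominated (bound := fun _ => 1) (fun z _ => by fun_prop) ?_
    (integrable_const _) ?_
  · intro z hz
    filter_upwards [ae_pos_of_Iic h0] with t ht
    exact kernel_norm_le _ (mul_nonneg ht.le hz)
  · exact Eventually.of_forall fun t => by fun_prop

theorem williamson_tendsto {μ : Measure ℝ} [IsProbabilityMeasure μ] (h0 : μ (Iic 0) = 0)
    {d : ℕ} (hd : 2 ≤ d) : Tendsto (williamson d μ) atTop (𝓝 0) := by
  have : Tendsto (williamson d μ) atTop (𝓝 (∫ _, (0 : ℝ) ∂μ)) := by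
    refine tendsto_integral_filter_of_dominated_convergence (fun _ => 1)
      (Eventually.of_forall fun z => by fun_prop) ?_ (integrable_const _) ?_
    · filter_upwards [eventually_ge_atTop 0] with z hz
      filter_upwards [ae_pos_of_Iic h0] with t ht
      exact kernel_norm_le _ (by positivity)
    · filter_upwards [ae_pos_of_Iic h0] with t ht
      refine tendsto_const_nhds.congr' ?_
      filter_upwards [eventually_ge_atTop t⁻¹] with z hz
      have : 1 ≤ t * z := by
        have := mul_le_mul_of_nonneg_left hz ht.le
        rwa [mul_inv_cancel₀ ht.ne'] at this
      rw [max_eq_right (by linarith), zero_pow (by omega)]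
  simpa using this

/-! ### Perturbation of copulas -/

theorem psiExt_continuous {f : ℝ → ℝ} (hf : ContinuousOn f (Ici 0))
    (hlim : Tendsto f atTop (𝓝 0)) : Continuous (psiExt f) := by
  rw [continuous_iff_continuousAt]
  intro z
  by_cases hz : z = ∞
  · subst hz
    rw [ContinuousAt, show psiExt f ∞ = 0 by simp [psiExt]]
    intro U hU
    obtain ⟨N, hN⟩ := (eventually_atTop.1 (hlim hU))
    rw [mem_map]
    refine mem_of_superset (Ioi_mem_nhds (ENNReal.ofReal_lt_top (r := N))) ?_
    intro w hw
    rw [mem_preimage]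
    by_cases hwt : w = ∞
    · simpa [psiExt, hwt] using mem_of_mem_nhds hU
    · simp only [psiExt, hwt, if_false]
      exact hN _ (ENNReal.ofReal_le_iff_le_toReal hwt |>.1 (le_of_lt hw))
  · have h1 : ContinuousAt (fun w : ℝ≥0∞ => f w.toReal) z := by
      have h2 : ContinuousWithinAt f (Ici 0) z.toReal := hf _ (mem_Ici.2 ENNReal.toReal_nonneg)
      have h3 : Tendsto ENNReal.toReal (𝓝 z) (𝓝[Ici 0] z.toReal) :=
        tendsto_nhdsWithin_iff.2 ⟨ENNReal.tendsto_toReal hz,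
          Eventually.of_forall fun w => mem_Ici.2 ENNReal.toReal_nonneg⟩
      exact h2.tendsto.comp h3
    refine h1.congr ?_
    filter_upwards [isOpen_ne.mem_nhds hz] with w hw
    simp only [psiExt]
    rw [if_neg hw]

/-- The infimum defining the pseudo-inverse is attained. -/
theorem psiExt_pseudoInv {f : ℝ → ℝ} (hf : ContinuousOn f (Ici 0)) (h0 : f 0 = 1)
    (hlim : Tendsto f atTop (𝓝 0)) {y : ℝ} (hy : y ∈ Icc (0 : ℝ) 1) :
    psiExt f (pseudoInv f y) = y := by
  have hcl : IsClosed {z : ℝ≥0∞ | psiExt f z = y} :=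
    isClosed_singleton.preimage (psiExt_continuous hf hlim)
  have hne : {z : ℝ≥0∞ | psiExt f z = y}.Nonempty := by
    rcases hy.1.eq_or_lt with h | h
    · exact ⟨∞, by simp [psiExt, h]⟩
    · obtain ⟨N, hN0, hN⟩ := ((eventually_ge_atTop 0).and
        (hlim.eventually (eventually_lt_nhds h))).exists
      obtain ⟨x, hx, hxy⟩ := intermediate_value_Icc' hN0 (hf.mono fun x hx => mem_Ici.2 hx.1)
        (⟨hN.le, h0 ▸ hy.2⟩ : y ∈ Icc (f N) (f 0))
      exact ⟨ENNReal.ofReal x, by simp [psiExt, ENNReal.toReal_ofReal hx.1, hxy]⟩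
  exact hcl.csInf_mem hne (OrderBot.bddBelow _)

theorem psiExt_add_sub_le {f : ℝ → ℝ} (hnn : ∀ z, 0 ≤ z → 0 ≤ f z)
    (hanti : ∀ a a', 0 ≤ a → a ≤ a' → f a' ≤ f a)
    (hconv : ∀ a a' b, 0 ≤ a → a ≤ a' → 0 ≤ b → f (a + b) - f (a' + b) ≤ f a - f a')
    (a a' b : ℝ≥0∞) :
    |psiExt f (a + b) - psiExt f (a' + b)| ≤ |psiExt f a - psiExt f a'| := by
  wlog haa : a ≤ a' generalizing a a'
  · rw [abs_sub_comm, abs_sub_comm (psiExt f a)]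
    exact this a' a (le_of_not_ge haa)
  by_cases hb : b = ∞
  · simp [hb]
  by_cases ha : a = ∞
  · obtain rfl : a' = ∞ := by rw [ha] at haa; exact top_le_iff.1 haa
    simp [ha]
  have hab : a + b ≠ ∞ := ENNReal.add_ne_top.2 ⟨ha, hb⟩
  have e : psiExt f (a + b) = f (a.toReal + b.toReal) := by
    rw [psiExt, if_neg hab, ENNReal.toReal_add ha hb]
  by_cases ha' : a' = ∞
  · have h1 : 0 ≤ f (a.toReal + b.toReal) := hnn _ (by positivity)
    have h2 : f (a.toReal + b.toReal) ≤ f a.toReal :=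
      hanti _ _ (by positivity) (le_add_of_nonneg_right (by positivity))
    rw [e]
    simp only [psiExt, ha', ha, top_add, if_true, if_false, sub_zero]
    rw [abs_of_nonneg h1, abs_of_nonneg (h1.trans h2)]
    exact h2
  · have hab' : a' + b ≠ ∞ := ENNReal.add_ne_top.2 ⟨ha', hb⟩
    have e' : psiExt f (a' + b) = f (a'.toReal + b.toReal) := by
      rw [psiExt, if_neg hab', ENNReal.toReal_add ha' hb]
    have hr : a.toReal ≤ a'.toReal := ENNReal.toReal_mono ha' haa
    have h1 := hanti (a.toReal + b.toReal) (a'.toReal + b.toReal) (by positivity) (by gcongr)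
    have h2 := hanti _ _ ENNReal.toReal_nonneg hr
    have h3 := hconv _ _ b.toReal ENNReal.toReal_nonneg hr ENNReal.toReal_nonneg
    rw [e, e']
    simp only [psiExt, ha', ha, if_false]
    rw [abs_of_nonneg (by linarith), abs_of_nonneg (by linarith)]
    exact h3

theorem abs_sub_sum_le {ι : Type*} {g : ℝ≥0∞ → ℝ}
    (hg : ∀ a a' b, |g (a + b) - g (a' + b)| ≤ |g a - g a'|) (s : Finset ι) (z z' : ι → ℝ≥0∞) :
    |g (∑ i ∈ s, z i) - g (∑ i ∈ s, z' i)| ≤ ∑ i ∈ s, |g (z i) - g (z' i)| := by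
  induction s using Finset.induction_on with
  | empty => simp
  | insert i s hi ih =>
    rw [Finset.sum_insert hi, Finset.sum_insert hi, Finset.sum_insert hi]
    refine (abs_sub_le _ (g (z' i + ∑ j ∈ s, z j)) _).trans ?_
    refine add_le_add (hg _ _ _) ?_
    rw [add_comm (z' i), add_comm (z' i)]
    exact (hg _ _ _).trans ih

/-- If `W_d μ` is uniformly `δ`-close to a generator `ψ`, then the copula of any rescaling
`W_d μ (c ·)` is uniformly `(d+1)δ`-close to the copula of `ψ`: by convexity, changing one
summand in `W_d μ (z₁ + ⋯ + z_d)` changes the value by at most as much as the value of `W_d μ` at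
that summand alone. -/
theorem archCopula_sub_le {d : ℕ} (hd : 2 ≤ d) {ψ : ℝ → ℝ} (hψ : IsGenerator ψ) {μ : Measure ℝ}
    [IsProbabilityMeasure μ] (h0 : μ (Iic 0) = 0) {δ : ℝ}
    (hδ : ∀ z, 0 ≤ z → |williamson d μ z - ψ z| ≤ δ) {c : ℝ} (hc : 0 < c) {W : ℝ → ℝ}
    (hW : ∀ z, 0 ≤ z → W z = williamson d μ (c * z)) {x : Fin d → ℝ}
    (hx : ∀ i, x i ∈ Icc (0 : ℝ) 1) :
    |archCopula d ψ x - archCopula d W x| ≤ (d + 1) * δ := by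
  set g : ℝ≥0∞ → ℝ := psiExt (williamson d μ) with hg
  have hδ0 : 0 ≤ δ := (abs_nonneg _).trans (hδ 0 le_rfl)
  have hclose : ∀ z, |psiExt ψ z - g z| ≤ δ := by
    intro z
    by_cases hz : z = ∞
    · simpa [hg, psiExt, hz] using hδ0
    · simp only [hg, psiExt, hz, if_false]
      rw [abs_sub_comm]
      exact hδ _ ENNReal.toReal_nonneg
  have hscale : ∀ z, psiExt W z = g (ENNReal.ofReal c * z) := by
    intro z
    have hc' : ENNReal.ofReal c ≠ 0 := by simpa using hc
    by_cases hz : z = ∞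
    · simp [hg, psiExt, hz, ENNReal.mul_top hc']
    · have : ENNReal.ofReal c * z ≠ ∞ := ENNReal.mul_ne_top ENNReal.ofReal_ne_top hz
      simp only [hg, psiExt, hz, this, if_false]
      rw [hW _ ENNReal.toReal_nonneg, ENNReal.toReal_mul, ENNReal.toReal_ofReal hc.le]
  have hWc : ContinuousOn W (Ici 0) := by
    have h1 : ContinuousOn (fun z => williamson d μ (c * z)) (Ici 0) :=
      (williamson_continuousOn h0 d).comp (by fun_prop) fun z hz => mul_nonneg hc.le hz
    exact h1.congr fun z hz => hW z hz
  have hW0 : W 0 = 1 := by rw [hW 0 le_rfl, mul_zero, williamson_zero]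
  have hWlim : Tendsto W atTop (𝓝 0) := by
    refine ((williamson_tendsto h0 hd).comp (tendsto_id.const_mul_atTop hc)).congr' ?_
    filter_upwards [eventually_ge_atTop 0] with z hz
    simp [hW z hz]
  have h1 : ∀ i, psiExt ψ (pseudoInv ψ (x i)) = x i := fun i =>
    psiExt_pseudoInv hψ.continuousOn hψ.map_zero hψ.tendsto_atTop (hx i)
  have h2 : ∀ i, g (ENNReal.ofReal c * pseudoInv W (x i)) = x i := fun i => by
    rw [← hscale]
    exact psiExt_pseudoInv hWc hW0 hWlim (hx i)
  have hsum := abs_sub_sum_le (g := g)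
    (psiExt_add_sub_le (fun z _ => williamson_nonneg d μ z)
      (fun _ _ ha haa => williamson_antitone h0 d ha haa)
      (fun _ _ _ ha haa hb => williamson_sub_le h0 d ha haa hb)) Finset.univ
    (fun i => pseudoInv ψ (x i)) (fun i => ENNReal.ofReal c * pseudoInv W (x i))
  have hsum' : ∑ i : Fin d, |g (pseudoInv ψ (x i)) - g (ENNReal.ofReal c * pseudoInv W (x i))| ≤
      d * δ := by
    calc _ ≤ ∑ _i : Fin d, δ := by
          refine Finset.sum_le_sum fun i _ => ?_
          have := hclose (pseudoInv ψ (x i))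
          rw [h1 i] at this
          rwa [h2 i, abs_sub_comm]
      _ = d * δ := by simp
  simp only [archCopula]
  rw [hscale, Finset.mul_sum]
  refine (abs_sub_le _ (g (∑ i, pseudoInv ψ (x i))) _).trans ?_
  linarith [hclose (∑ i, pseudoInv ψ (x i))]

/-! ### Smearing a measure over a geometric grid -/

/-- The largest element `≤ t` of the geometric grid `{exp (η k) : k ∈ ℤ}`, for `t > 0`. For `t ≤ 0`
the junk value of `Real.log` still gives a positive grid point. -/
def grid (η t : ℝ) : ℝ := Real.exp (η * ⌊Real.log t / η⌋)

theorem grid_pos (η t : ℝ) : 0 < grid η t := Real.exp_pos _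

theorem measurable_grid (η : ℝ) : Measurable (grid η) := by
  have h : Measurable fun t : ℝ => ⌊Real.log t / η⌋ :=
    (Real.measurable_log.div_const η).floor
  have h' : Measurable fun t : ℝ => ((⌊Real.log t / η⌋ : ℤ) : ℝ) :=
    (measurable_of_countable fun k : ℤ => (k : ℝ)).comp h
  exact Real.measurable_exp.comp (h'.const_mul η)

theorem countable_range_grid (η : ℝ) : (range (grid η)).Countable := by
  refine (countable_range fun k : ℤ => Real.exp (η * k)).mono ?_
  rintro _ ⟨t, rfl⟩
  exact ⟨_, rfl⟩

theorem grid_le {η t : ℝ} (hη : 0 < η) (ht : 0 < t) : grid η t ≤ t := by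
  rw [grid, ← Real.le_log_iff_exp_le ht, ← le_div_iff₀' hη]
  exact Int.floor_le _

theorem le_grid {η t : ℝ} (hη : 0 < η) (ht : 0 < t) : t ≤ Real.exp η * grid η t := by
  rw [grid, ← Real.exp_add, ← Real.log_le_iff_le_exp ht]
  have := (Int.lt_floor_add_one (Real.log t / η)).le
  rw [div_le_iff₀ hη] at this
  linarith

/-- The law of `c · grid(T) · (1 + η X)`, where `T ~ ν` and `X ~ κ` are independent. It is a
countable mixture of affine images of `κ` and inherits its type (atomic, absolutely continuous,
singular), whatever `ν` is. -/
def smear (c η : ℝ) (ν κ : Measure ℝ) : Measure ℝ :=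
  (ν.prod κ).map fun p => c * (grid η p.1 * (1 + η * p.2))

section smear

variable {c η : ℝ} {ν κ : Measure ℝ}

theorem measurable_smear_map (c η : ℝ) :
    Measurable fun p : ℝ × ℝ => c * (grid η p.1 * (1 + η * p.2)) := by
  have : Measurable fun p : ℝ × ℝ => grid η p.1 := (measurable_grid η).comp measurable_fst
  fun_prop

theorem isProbabilityMeasure_smear (c η : ℝ) (ν κ : Measure ℝ) [IsProbabilityMeasure ν]
    [IsProbabilityMeasure κ] : IsProbabilityMeasure (smear c η ν κ) :=
  Measure.isProbabilityMeasure_map (measurable_smear_map c η).aemeasurable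

theorem smear_eq_zero [SFinite κ] {A : Set ℝ} (hA : MeasurableSet A)
    (h : ∀ ρ ∈ range (grid η), κ {x | c * (ρ * (1 + η * x)) ∈ A} = 0) : smear c η ν κ A = 0 := by
  have hm := measurable_smear_map c η
  rw [smear, Measure.map_apply hm hA, Measure.measure_prod_null (hm hA)]
  exact Eventually.of_forall fun t => h _ ⟨t, rfl⟩

theorem smear_Iic [SFinite κ] (hc : 0 < c) (hη : 0 < η) (hκ : κ (Icc 0 1)ᶜ = 0) :
    smear c η ν κ (Iic 0) = 0 := by
  refine smear_eq_zero measurableSet_Iic ?_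
  rintro _ ⟨t, rfl⟩
  refine measure_mono_null ?_ hκ
  intro x hx hx'
  have h1 := grid_pos η t
  have h2 : 0 < 1 + η * x := by have := mul_nonneg hη.le hx'.1; linarith
  have h3 : 0 < c * (grid η t * (1 + η * x)) := by positivity
  exact absurd h3 (not_lt.2 hx)

theorem williamson_smear_scale (d : ℕ) (z : ℝ) :
    williamson d (smear c η ν κ) z = williamson d (smear 1 η ν κ) (c * z) := by
  have hk : ∀ y : ℝ, AEStronglyMeasurable (fun t : ℝ => max (1 - t * y) 0 ^ (d - 1))
    (smear 1 η ν κ) := fun y => by fun_prop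
  rw [williamson, williamson, smear, smear,
    integral_map (measurable_smear_map c η).aemeasurable (by fun_prop),
    integral_map (measurable_smear_map 1 η).aemeasurable (by fun_prop)]
  congr 1
  ext p
  congr 2
  ring

theorem williamson_smear_close [IsProbabilityMeasure ν] [IsProbabilityMeasure κ]
    (hν : ν (Iic 0) = 0) (hκ : κ (Icc 0 1)ᶜ = 0) (hη : 0 < η) {d : ℕ} {z : ℝ} (hz : 0 ≤ z) :
    |williamson d (smear 1 η ν κ) z - williamson d ν z| ≤ (d - 1 : ℕ) * (Real.exp η - 1) := by
  have hm := measurable_smear_map 1 η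
  have hprob := isProbabilityMeasure_smear 1 η ν κ
  have e1 : williamson d (smear 1 η ν κ) z =
      ∫ p, max (1 - (1 * (grid η p.1 * (1 + η * p.2))) * z) 0 ^ (d - 1) ∂(ν.prod κ) := by
    rw [williamson, smear, integral_map hm.aemeasurable (by fun_prop)]
  have e2 : williamson d ν z = ∫ p, max (1 - p.1 * z) 0 ^ (d - 1) ∂(ν.prod κ) := by
    rw [integral_fun_fst (fun t : ℝ => max (1 - t * z) 0 ^ (d - 1))]
    simp [williamson]
  have i1 : Integrable (fun p : ℝ × ℝ =>
      max (1 - (1 * (grid η p.1 * (1 + η * p.2))) * z) 0 ^ (d - 1)) (ν.prod κ) :=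
    (integrable_kernel (smear_Iic one_pos hη hκ) (d - 1) hz).comp_measurable hm
  have i2 : Integrable (fun p : ℝ × ℝ => max (1 - p.1 * z) 0 ^ (d - 1)) (ν.prod κ) :=
    (integrable_kernel hν (d - 1) hz).comp_fst κ
  rw [e1, e2, ← integral_sub i1 i2, ← Real.norm_eq_abs]
  refine (norm_integral_le_of_norm_le_const (μ := ν.prod κ)
    (C := (d - 1 : ℕ) * (Real.exp η - 1)) ?_).trans (by simp)
  have a1 : ∀ᵐ p ∂(ν.prod κ), 0 < p.1 :=
    Measure.quasiMeasurePreserving_fst.ae (ae_pos_of_Iic hν)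
  have a2 : ∀ᵐ p ∂(ν.prod κ), p.2 ∈ Icc (0 : ℝ) 1 :=
    Measure.quasiMeasurePreserving_snd.ae (by rw [ae_iff]; exact hκ)
  filter_upwards [a1, a2] with p hp1 hp2
  rw [Real.norm_eq_abs]
  set t := p.1
  set g := grid η t
  have hg : 0 < g := grid_pos η t
  have hgt : g ≤ t := grid_le hη hp1
  have htg : t ≤ Real.exp η * g := le_grid hη hp1
  have hexp : 1 + η ≤ Real.exp η := by linarith [Real.add_one_le_exp η]
  have hx0 : 0 ≤ η * p.2 := mul_nonneg hη.le hp2.1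
  have hx1 : η * p.2 ≤ Real.exp η - 1 := by
    have := mul_le_of_le_one_right hη.le hp2.2
    linarith
  set θ := Real.exp η - 1
  have hθ : 0 ≤ θ := by linarith
  -- The original point `t` and the new point both lie in `[g, e^η g]`.
  have htg' : t ≤ g + θ * g := by
    have : Real.exp η * g = g + θ * g := by ring
    linarith
  set t' := 1 * (g * (1 + η * p.2)) with ht'
  have h1 : g ≤ t' := by rw [ht', one_mul]; nlinarith
  have h2 : t' ≤ g + θ * g := by rw [ht', one_mul]; nlinarith
  have habs : |t' - t| ≤ θ * g := by rw [abs_le]; constructor <;> linarith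
  have habsz : |t' * z - t * z| ≤ θ * g * z := by
    rw [← sub_mul, abs_mul, abs_of_nonneg hz]
    gcongr
  refine kernel_relative (d - 1) (by positivity) (by positivity) hθ (habsz.trans ?_)
    (habsz.trans ?_)
  · rw [mul_assoc]; gcongr
  · rw [mul_assoc]; gcongr

end smear

theorem memPW_of_williamson_one {d : ℕ} (hd : 2 ≤ d) {μ : Measure ℝ} [hμ : IsProbabilityMeasure μ]
    (h0 : μ (Iic 0) = 0) (h1 : williamson d μ 1 = 1 / 2) : memPW d μ := by
  refine ⟨hμ, measure_mono_null Iio_subset_Iic_self h0,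
    measure_mono_null (by simp) h0, ?_⟩
  rw [← h1, williamson, ← integral_indicator measurableSet_Icc]
  refine integral_congr_ae ?_
  filter_upwards [ae_pos_of_Iic h0] with t ht
  by_cases ht1 : t ≤ 1
  · rw [indicator_of_mem (mem_Icc.2 ⟨ht.le, ht1⟩), mul_one, max_eq_left (by linarith)]
  · rw [indicator_of_notMem (fun h => ht1 h.2), mul_one, max_eq_right (by linarith),
      zero_pow (by omega)]

/-- The scale `c` is chosen so as to normalize the Williamson transform; scaling does not affect
the copula. -/
theorem exists_smear {d : ℕ} (hd : 2 ≤ d) {ψ : ℝ → ℝ} (hψ : IsGenerator ψ) {ν : Measure ℝ}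
    [IsProbabilityMeasure ν] (hν : ν (Iic 0) = 0) {δ η : ℝ}
    (hδ : ∀ z, 0 ≤ z → |williamson d ν z - ψ z| ≤ δ) (hη : 0 < η)
    (hηδ : (d - 1 : ℕ) * (Real.exp η - 1) ≤ δ)
    (κ : Measure ℝ) [IsProbabilityMeasure κ] (hκ : κ (Icc 0 1)ᶜ = 0) :
    ∃ c, 0 < c ∧ memPW d (smear c η ν κ) ∧ ∀ x : Fin d → ℝ, (∀ i, x i ∈ Icc (0 : ℝ) 1) →
      |archCopula d ψ x - archCopula d (williamson d (smear c η ν κ)) x| ≤ (d + 1) * (2 * δ) := by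
  have hp := isProbabilityMeasure_smear 1 η ν κ
  have h0 : smear 1 η ν κ (Iic 0) = 0 := smear_Iic one_pos hη hκ
  obtain ⟨c, hc, hc1⟩ : ∃ c, 0 < c ∧ williamson d (smear 1 η ν κ) c = 1 / 2 := by
    obtain ⟨N, hN0, hN⟩ := ((eventually_ge_atTop 0).and ((williamson_tendsto h0 hd).eventually
      (eventually_lt_nhds (by norm_num : (0 : ℝ) < 1 / 2)))).exists
    obtain ⟨c, hc, hc1⟩ := intermediate_value_Icc' hN0
      ((williamson_continuousOn h0 d).mono fun x hx => mem_Ici.2 hx.1)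
      (⟨hN.le, by rw [williamson_zero]; norm_num⟩ : (1 / 2 : ℝ) ∈ Icc _ _)
    refine ⟨c, hc.1.lt_of_ne ?_, hc1⟩
    rintro rfl
    rw [williamson_zero] at hc1
    norm_num at hc1
  have hpc := isProbabilityMeasure_smear c η ν κ
  refine ⟨c, hc, memPW_of_williamson_one hd (smear_Iic hc hη hκ) ?_, fun x hx => ?_⟩
  · rw [williamson_smear_scale, mul_one, hc1]
  · refine archCopula_sub_le hd hψ h0 (fun z hz => ?_) hc
      (fun z _ => williamson_smear_scale d z) hx
    have := williamson_smear_close (d := d) hν hκ hη hz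
    refine (abs_sub_le _ (williamson d ν z) _).trans ?_
    linarith [hδ z hz]

/-! ### Measure types and the Cantor set -/

section types

variable {c η : ℝ} {ν κ : Measure ℝ}

theorem smear_atomic (c : ℝ) :
    ∃ S : Set ℝ, S.Countable ∧ smear c η ν (Measure.dirac 0) Sᶜ = 0 := by
  have hS : ((fun ρ => c * ρ) '' range (grid η)).Countable := (countable_range_grid η).image _
  refine ⟨_, hS, smear_eq_zero hS.measurableSet.compl fun ρ hρ => ?_⟩
  have : MeasurableSet {x : ℝ | c * (ρ * (1 + η * x)) ∈ ((fun ρ => c * ρ) '' range (grid η))ᶜ} :=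
    (by fun_prop : Measurable fun x : ℝ => c * (ρ * (1 + η * x))) hS.measurableSet.compl
  rw [Measure.dirac_apply' _ this, indicator_of_notMem]
  intro h
  exact h ⟨ρ, hρ, by simp⟩

theorem volume_affine_preimage {a b : ℝ} (hb : b ≠ 0) {A : Set ℝ} (hA : volume A = 0) :
    volume {x : ℝ | a + b * x ∈ A} = 0 := by
  have : {x : ℝ | a + b * x ∈ A} = (fun x => b * x) ⁻¹' ((fun x => a + x) ⁻¹' A) := rfl
  rw [this, Real.volume_preimage_mul_left hb, measure_preimage_add, hA, mul_zero]

theorem smear_map_eq (c η ρ x : ℝ) : c * (ρ * (1 + η * x)) = c * ρ + c * ρ * η * x := by ring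

theorem smear_slope_ne (hc : 0 < c) (hη : 0 < η) {ρ : ℝ} (hρ : ρ ∈ range (grid η)) :
    c * ρ * η ≠ 0 := by
  obtain ⟨t, rfl⟩ := hρ
  have := grid_pos η t
  positivity

theorem smear_absolutelyContinuous (hc : 0 < c) (hη : 0 < η) :
    smear c η ν (volume.restrict (Icc (0 : ℝ) 1)) ≪ volume := by
  refine Measure.AbsolutelyContinuous.mk fun A hA hA0 => smear_eq_zero hA fun ρ hρ => ?_
  refine Measure.absolutelyContinuous_of_le Measure.restrict_le_self ?_
  simp only [smear_map_eq]
  exact volume_affine_preimage (smear_slope_ne hc hη hρ) hA0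

theorem smear_atomless [SFinite κ] (hc : 0 < c) (hη : 0 < η) (hκ : ∀ x, κ {x} = 0) (x : ℝ) :
    smear c η ν κ {x} = 0 := by
  refine smear_eq_zero (measurableSet_singleton x) fun ρ hρ => ?_
  have h := smear_slope_ne hc hη hρ
  refine measure_mono_null (t := {(x - c * ρ) / (c * ρ * η)}) ?_ (hκ _)
  intro y hy
  rw [mem_ofPred_eq, smear_map_eq, mem_singleton_iff] at hy
  rw [mem_singleton_iff, eq_div_iff h]
  linarith

theorem smear_singular [SFinite κ] (hc : 0 < c) (hη : 0 < η) (hκ : κ ⟂ₘ volume) :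
    smear c η ν κ ⟂ₘ volume := by
  obtain ⟨N, hN, hκN, hvN⟩ := hκ
  -- `smear` lives on the countable union of the affine images of the carrier `Nᶜ` of `κ`.
  set g : ℝ → ℝ → ℝ := fun ρ y => -1 / η + (c * ρ * η)⁻¹ * y with hg
  have hinv : ∀ ρ ∈ range (grid η), ∀ x, g ρ (c * (ρ * (1 + η * x))) = x := by
    intro ρ hρ x
    have h := smear_slope_ne hc hη hρ
    have h1 : ρ ≠ 0 := by rintro rfl; simp at h
    simp only [hg]
    field_simp
    ring
  have hT : MeasurableSet (⋃ ρ ∈ range (grid η), g ρ ⁻¹' Nᶜ) := by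
    refine MeasurableSet.biUnion (countable_range_grid η) fun ρ _ => ?_
    exact (by fun_prop : Measurable (g ρ)) hN.compl
  refine ⟨(⋃ ρ ∈ range (grid η), g ρ ⁻¹' Nᶜ)ᶜ, hT.compl, smear_eq_zero hT.compl fun ρ hρ => ?_, ?_⟩
  · refine measure_mono_null ?_ hκN
    intro x hx
    by_contra hxN
    refine hx (mem_biUnion hρ ?_)
    rw [mem_preimage, hinv ρ hρ]
    exact hxN
  · rw [compl_compl, measure_biUnion_null_iff (countable_range_grid η)]
    intro ρ hρ
    exact volume_affine_preimage (inv_ne_zero (smear_slope_ne hc hη hρ)) hvN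

end types

theorem volume_cantorSet_eq_zero : volume cantorSet = 0 := by
  have hstep : ∀ n, volume (preCantorSet n) ≤ ENNReal.ofReal ((2 / 3 : ℝ) ^ n) := by
    intro n
    induction n with
    | zero => simp
    | succ n ih =>
      rw [preCantorSet_succ]
      have e1 : (fun x : ℝ => x / 3) '' preCantorSet n = (fun x => 3 * x) ⁻¹' preCantorSet n := by
        ext y
        constructor
        · rintro ⟨x, hx, rfl⟩
          rw [mem_preimage]; convert hx using 1; ring
        · exact fun hy => ⟨3 * y, hy, by ring⟩
      have e2 : (fun x : ℝ => (2 + x) / 3) '' preCantorSet n =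
          {x : ℝ | -2 + 3 * x ∈ preCantorSet n} := by
        ext y
        constructor
        · rintro ⟨x, hx, rfl⟩
          rw [mem_ofPred_eq]; convert hx using 1; ring
        · exact fun hy => ⟨-2 + 3 * y, hy, by ring⟩
      have e3 : {x : ℝ | -2 + 3 * x ∈ preCantorSet n} =
          (fun x => 3 * x) ⁻¹' ((fun x => -2 + x) ⁻¹' preCantorSet n) := rfl
      refine (measure_union_le _ _).trans ?_
      rw [e1, e2, e3, Real.volume_preimage_mul_left (by norm_num),
        Real.volume_preimage_mul_left (by norm_num), measure_preimage_add, ← two_mul]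
      calc 2 * (ENNReal.ofReal |3⁻¹| * volume (preCantorSet n))
          ≤ 2 * (ENNReal.ofReal |3⁻¹| * ENNReal.ofReal ((2 / 3 : ℝ) ^ n)) := by gcongr
        _ = ENNReal.ofReal ((2 / 3 : ℝ) ^ (n + 1)) := by
          rw [← ENNReal.ofReal_mul (by positivity),
            show (2 : ℝ≥0∞) = ENNReal.ofReal 2 by simp, ← ENNReal.ofReal_mul (by norm_num)]
          congr 1
          rw [abs_of_pos (by norm_num), pow_succ]; ring
  have hlim : Tendsto (fun n : ℕ => ENNReal.ofReal ((2 / 3 : ℝ) ^ n)) atTop (𝓝 0) := by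
    have := ENNReal.tendsto_ofReal
      (tendsto_pow_atTop_nhds_zero_of_lt_one (r := (2 / 3 : ℝ)) (by norm_num) (by norm_num))
    simpa using this
  exact le_antisymm (ge_of_tendsto' hlim fun n =>
    (measure_mono (iInter_subset _ n)).trans (hstep n)) bot_le

/-- The Cantor set is Borel isomorphic to `ℝ`; transporting the uniform law on `[0, 1]` gives an
atomless probability carried by a Lebesgue null set. -/
theorem exists_singular_atomless : ∃ κ : Measure ℝ, IsProbabilityMeasure κ ∧
    κ (Icc 0 1)ᶜ = 0 ∧ κ ⟂ₘ volume ∧ ∀ x, κ {x} = 0 := by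
  have hpol : PolishSpace cantorSet := isClosed_cantorSet.polishSpace
  have hunc : ¬ Countable cantorSet := by
    intro h
    have : Countable (ℕ → Bool) := cantorSetEquivNatToBool.symm.countable_iff.2 h
    have h2 : Countable (Set ℕ) :=
      (Function.Injective.countable (f := fun (s : Set ℕ) (n : ℕ) => decide (n ∈ s)) (by
        intro s t hst
        ext n
        simpa using congrFun hst n))
    obtain ⟨i, hi⟩ := h2
    exact Function.cantor_injective i hi
  have hunc' : ¬ Countable ℝ := not_countable
  let e : ℝ ≃ᵐ cantorSet := PolishSpace.measurableEquivOfNotCountable hunc' hunc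
  set g : ℝ → ℝ := fun x => (e x : ℝ) with hg
  have hgm : Measurable g := measurable_subtype_coe.comp e.measurable
  have hgi : Function.Injective g := Subtype.val_injective.comp e.injective
  have hunif : IsProbabilityMeasure (volume.restrict (Icc (0 : ℝ) 1)) := ⟨by simp⟩
  have hC : MeasurableSet cantorSet := isClosed_cantorSet.measurableSet
  have hnull : (volume.restrict (Icc (0 : ℝ) 1)).map g cantorSetᶜ = 0 := by
    rw [Measure.map_apply hgm hC.compl]
    have : g ⁻¹' cantorSetᶜ = ∅ := by ext x; simp [hg]
    rw [this, measure_empty]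
  refine ⟨(volume.restrict (Icc (0 : ℝ) 1)).map g,
    Measure.isProbabilityMeasure_map hgm.aemeasurable,
    measure_mono_null (compl_subset_compl.2 cantorSet_subset_unitInterval) hnull,
    ⟨cantorSetᶜ, hC.compl, hnull, by rw [compl_compl]; exact volume_cantorSet_eq_zero⟩, fun x => ?_⟩
  rw [Measure.map_apply hgm (measurableSet_singleton x)]
  exact (subsingleton_singleton.preimage hgi).measure_zero _

/-! ### Density of the three families -/

/-- For every normalized `d`-monotone generator `ψ` and every `ε > 0`
there exist `γ₁, γ₂, γ₃ ∈ P_{W_d}` with `γ₁` purely atomic, `γ₂` absolutely continuous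
w.r.t. Lebesgue measure, `γ₃` singular w.r.t. Lebesgue measure and atomless, such that
the copulas induced by `W_d γᵢ` are uniformly within `ε` of `C_ψ` on `[0,1]^d`. In
particular these three families of Archimedean copulas are each dense. -/
theorem dense_families_of_archimedean_copulas
    (d : ℕ) (hd : 3 ≤ d) (ψ : ℝ → ℝ)
    (hψ : IsdMonotoneGenerator d ψ) (hψnorm : ψ 1 = 1 / 2)
    (ε : ℝ) (hε : 0 < ε) :
    ∃ γ₁ γ₂ γ₃ : Measure ℝ, memPW d γ₁ ∧ memPW d γ₂ ∧ memPW d γ₃ ∧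
      (∃ S : Set ℝ, S.Countable ∧ γ₁ Sᶜ = 0) ∧
      γ₂ ≪ volume ∧
      (γ₃ ⟂ₘ volume ∧ ∀ x : ℝ, γ₃ {x} = 0) ∧
      (∀ x : Fin d → ℝ, (∀ i, x i ∈ Icc (0 : ℝ) 1) →
        |archCopula d ψ x - archCopula d (williamson d γ₁) x| < ε ∧
        |archCopula d ψ x - archCopula d (williamson d γ₂) x| < ε ∧
        |archCopula d ψ x - archCopula d (williamson d γ₃) x| < ε) := by
  obtain ⟨m, rfl⟩ : ∃ m, d = m + 3 := ⟨d - 3, by omega⟩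
  have hd2 : 2 ≤ m + 3 := by omega
  have hgen := hψ.toIsGenerator
  obtain ⟨δ, hδ, hδε⟩ : ∃ δ : ℝ, 0 < δ ∧ (((m + 3 : ℕ) : ℝ) + 1) * (2 * δ) < ε := by
    refine ⟨ε / (4 * (((m + 3 : ℕ) : ℝ) + 1)), by positivity, ?_⟩
    have : (((m + 3 : ℕ) : ℝ) + 1) * (2 * (ε / (4 * (((m + 3 : ℕ) : ℝ) + 1)))) = ε / 2 := by
      field_simp
      norm_num
    linarith
  obtain ⟨ν, hν, hν0, hclose⟩ := exists_williamson_close hψ hδ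
  obtain ⟨η, hη, hηδ⟩ : ∃ η : ℝ, 0 < η ∧ ((m + 3 - 1 : ℕ) : ℝ) * (Real.exp η - 1) ≤ δ := by
    have hc : Tendsto (fun η : ℝ => ((m + 3 - 1 : ℕ) : ℝ) * (Real.exp η - 1)) (𝓝[>] 0) (𝓝 0) := by
      have : Continuous fun η : ℝ => ((m + 3 - 1 : ℕ) : ℝ) * (Real.exp η - 1) := by fun_prop
      have h := this.tendsto 0
      simp only [Real.exp_zero, sub_self, mul_zero] at h
      exact h.mono_left nhdsWithin_le_nhds
    obtain ⟨η, h1, h2⟩ := ((hc.eventually (eventually_le_nhds hδ)).and self_mem_nhdsWithin).exists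
    exact ⟨η, h2, h1⟩
  have key := fun κ [IsProbabilityMeasure κ] hκ =>
    exists_smear hd2 hgen hν0 hclose hη hηδ κ hκ
  obtain ⟨κ, hκp, hκ01, hκs, hκa⟩ := exists_singular_atomless
  have hunif : IsProbabilityMeasure (volume.restrict (Icc (0 : ℝ) 1)) := ⟨by simp⟩
  obtain ⟨c₁, hc₁, hm₁, h₁⟩ := key (Measure.dirac 0) (by
    rw [Measure.dirac_apply' _ measurableSet_Icc.compl]; simp)
  obtain ⟨c₂, hc₂, hm₂, h₂⟩ := key (volume.restrict (Icc (0 : ℝ) 1)) (by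
    rw [Measure.restrict_apply measurableSet_Icc.compl]; simp)
  obtain ⟨c₃, hc₃, hm₃, h₃⟩ := key κ hκ01
  refine ⟨_, _, _, hm₁, hm₂, hm₃, smear_atomic _, smear_absolutelyContinuous hc₂ hη,
    ⟨smear_singular hc₃ hη hκs, smear_atomless hc₃ hη hκa⟩, fun x hx => ⟨?_, ?_, ?_⟩⟩
  · exact (h₁ x hx).trans_lt hδε
  · exact (h₂ x hx).trans_lt hδε
  · exact (h₃ x hx).trans_lt hδε
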